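/- Let G be a connected cactus graph with at least 3 vertices, i.e., a connected graph in which every block (maximal 2-connected subgraph) is an edge or a cycle; equivalently, an iterated coalescence of cycles and edges. Then H_G = H_G^ψ = [1,∞), and [2,∞) ⊆ H_G^φ ⊆ [1,∞). -/

import Mathlib

open Set Matrix

noncomputable section

/-- Entrywise power function `x ↦ x^α` on nonnegative reals, with the convention `0^α := 0`. -/
def powEnt (α x : ℝ) : ℝ := if x = 0 then 0 else x ^ α

/-- The odd extension `ψ_α(x) = sgn(x)|x|^α` of the power function, with `ψ_α(0) = 0`. -/
def psiF (α x : ℝ) : ℝ := Real.sign x * |x| ^ α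

/-- The even extension `φ_α(x) = |x|^α` of the power function, with `φ_α(0) = 0`. -/
def phiF (α x : ℝ) : ℝ := if x = 0 then 0 else |x| ^ α

/-- `P_G(I)`: positive semidefinite matrices with entries in `I` and zeros outside
the edge pattern of `G`. -/
def PsetG {V : Type*} [Fintype V] (G : SimpleGraph V) (I : Set ℝ) :
    Set (Matrix V V ℝ) :=
  {A | A.PosSemidef ∧ (∀ i j, A i j ∈ I) ∧ ∀ i j, i ≠ j → ¬ G.Adj i j → A i j = 0}

/-- `H_G`: the set of entrywise powers preserving `P_G([0,∞))`. -/
def HsetG {V : Type*} [Fintype V] (G : SimpleGraph V) : Set ℝ :=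
  {α | ∀ A ∈ PsetG G (Ici (0 : ℝ)), A.map (powEnt α) ∈ PsetG G univ}

/-- `H_G^ψ`: the set of powers `α` such that `ψ_α` preserves `P_G(ℝ)`. -/
def HsetPsi {V : Type*} [Fintype V] (G : SimpleGraph V) : Set ℝ :=
  {α | ∀ A ∈ PsetG G univ, A.map (psiF α) ∈ PsetG G univ}

/-- `H_G^φ`: the set of powers `α` such that `φ_α` preserves `P_G(ℝ)`. -/
def HsetPhi {V : Type*} [Fintype V] (G : SimpleGraph V) : Set ℝ :=
  {α | ∀ A ∈ PsetG G univ, A.map (phiF α) ∈ PsetG G univ}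

/-- The set of which the critical exponent is the least element:
all `α` such that every `β ≥ α` lies in `H`. -/
def CEset (H : Set ℝ) : Set ℝ := {α | ∀ β, α ≤ β → β ∈ H}

/-- The positive integers, as a set of reals. -/
def posNats : Set ℝ := {x | ∃ k : ℕ, 0 < k ∧ x = k}

/-- The odd positive integers `−1+2ℕ`, as a set of reals. -/
def oddNats : Set ℝ := {x | ∃ k : ℕ, 0 < k ∧ x = 2 * k - 1}

/-- The even positive integers `2ℕ`, as a set of reals. -/
def evenNats : Set ℝ := {x | ∃ k : ℕ, 0 < k ∧ x = 2 * k}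

/-- `addCycleAt G v p`: the graph `G` with a cycle of `p` edges attached at the vertex `v`
(for `p = 2` this degenerates to a pendant edge at `v`): the `p − 1` new vertices form a path
whose two endpoints are joined to `v`. -/
def addCycleAt {V : Type*} (G : SimpleGraph V) (v : V) (p : ℕ) :
    SimpleGraph (V ⊕ Fin (p - 1)) :=
  SimpleGraph.fromRel (fun x y =>
    match x, y with
    | Sum.inl a, Sum.inl b => G.Adj a b
    | Sum.inl a, Sum.inr i => a = v ∧ ((i : ℕ) = 0 ∨ (i : ℕ) = p - 2)
    | Sum.inr i, Sum.inr j => (j : ℕ) = (i : ℕ) + 1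
    | Sum.inr _, Sum.inl _ => False)

/-- Connected cactus graphs: iterated coalescences of cycles and edges, built from a single
vertex by repeatedly attaching, at a vertex, either a pendant edge (`p = 2`) or a cycle
(`p ≥ 3`). -/
inductive CactusBuilt : ∀ {W : Type}, SimpleGraph W → Prop
  | single : CactusBuilt (⊥ : SimpleGraph (Fin 1))
  | attach : ∀ {W : Type} (G : SimpleGraph W) (v : W) (p : ℕ),
      2 ≤ p → CactusBuilt G → CactusBuilt (addCycleAt G v p)

lemma psiF_zero (α : ℝ) : psiF α 0 = 0 := by simp [psiF]

lemma psiF_of_nonneg {α x : ℝ} (hα : α ≠ 0) (hx : 0 ≤ x) : psiF α x = x ^ α := by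
  rcases hx.eq_or_lt with rfl | hx
  · simp [psiF, Real.zero_rpow hα]
  · simp [psiF, Real.sign_of_pos hx, abs_of_pos hx]

lemma psiF_neg (α x : ℝ) : psiF α (-x) = -psiF α x := by
  simp [psiF, Real.sign_neg]

lemma psiF_mul (α x y : ℝ) : psiF α (x * y) = psiF α x * psiF α y := by
  have hs : Real.sign (x * y) = Real.sign x * Real.sign y := by
    rcases lt_trichotomy x 0 with hx | rfl | hx <;> rcases lt_trichotomy y 0 with hy | rfl | hy <;>
      simp [Real.sign_of_neg, Real.sign_of_pos, mul_pos_of_neg_of_neg, mul_neg_of_neg_of_pos,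
        mul_neg_of_pos_of_neg, *]
  rw [psiF, psiF, psiF, hs, abs_mul, Real.mul_rpow (abs_nonneg x) (abs_nonneg y)]
  ring

lemma psiF_nonneg (α : ℝ) {x : ℝ} (hx : 0 ≤ x) : 0 ≤ psiF α x := by
  rcases hx.eq_or_lt with rfl | hx
  · simp [psiF]
  · rw [psiF, Real.sign_of_pos hx, one_mul]
    positivity

lemma psiF_add_le {α a b : ℝ} (hα : 1 ≤ α) (ha : 0 ≤ a) (hb : 0 ≤ b) :
    psiF α a + psiF α b ≤ psiF α (a + b) := by
  have h0 : α ≠ 0 := by linarith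
  rw [psiF_of_nonneg h0 ha, psiF_of_nonneg h0 hb, psiF_of_nonneg h0 (add_nonneg ha hb)]
  exact Real.add_rpow_le_rpow_add ha hb hα

lemma hasDerivAt_psiF {α : ℝ} (hα : 1 ≤ α) (x : ℝ) :
    HasDerivAt (psiF α) (α * |x| ^ (α - 1)) x := by
  have h0 : α ≠ 0 := by linarith
  rcases lt_trichotomy x 0 with hx | rfl | hx
  · have h : HasDerivAt (fun y : ℝ => -(-y) ^ α) (-((-1) * α * (-x) ^ (α - 1))) x :=
      ((hasDerivAt_neg x).rpow_const (Or.inr hα)).neg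
    rw [abs_of_neg hx]
    refine (h.congr_of_eventuallyEq ?_).congr_deriv (by ring)
    filter_upwards [Iio_mem_nhds hx] with y hy
    rw [← neg_neg y, psiF_neg, psiF_of_nonneg h0 (by simpa using le_of_lt hy), neg_neg]
  · have hd : α * |(0 : ℝ)| ^ (α - 1) = |(0 : ℝ)| ^ (α - 1) := by
      rcases hα.eq_or_lt with rfl | h
      · simp
      · simp [Real.zero_rpow (sub_pos.2 h).ne']
    rw [hd, hasDerivAt_iff_tendsto_slope]
    have hc : Continuous fun y : ℝ => |y| ^ (α - 1) :=
      continuous_abs.rpow_const fun _ => Or.inr (by linarith)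
    refine ((hc.tendsto 0).mono_left nhdsWithin_le_nhds).congr' ?_
    filter_upwards [self_mem_nhdsWithin] with y hy
    have hy : y ≠ 0 := hy
    rw [slope_def_field, psiF_zero, sub_zero, sub_zero, psiF, Real.rpow_sub_one (by simpa using hy)]
    rcases lt_or_gt_of_ne hy with h | h
    · rw [Real.sign_of_neg h, abs_of_neg h]; field_simp
    · rw [Real.sign_of_pos h, abs_of_pos h]; field_simp
  · refine ((Real.hasDerivAt_rpow_const (Or.inr hα)).congr_of_eventuallyEq ?_).congr_deriv
      (by rw [abs_of_pos hx])
    filter_upwards [Ioi_mem_nhds hx] with y hy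
    exact psiF_of_nonneg h0 (le_of_lt hy)

section PosSemidef

variable {W : Type*}

/-- The result of clearing row and column `u` of `A` by symmetric Gaussian elimination. -/
def elimVertex (A : Matrix W W ℝ) (u : W) : Matrix W W ℝ :=
  of fun i j => A i j - A i u * A u j / A u u

lemma elimVertex_apply_of_left {A : Matrix W W ℝ} {u i : W} (h : A i u = 0) (j : W) :
    elimVertex A u i j = A i j := by
  simp [elimVertex, h]

lemma elimVertex_apply_of_right {A : Matrix W W ℝ} {u j : W} (h : A u j = 0) (i : W) :
    elimVertex A u i j = A i j := by
  simp [elimVertex, h]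

/-- Entrywise `ψ_α` is superadditive for decompositions without off-diagonal interaction. -/
lemma posSemidef_map_psiF_add {α : ℝ} (hα : 1 ≤ α) {B C : Matrix W W ℝ} (hB : B.PosSemidef)
    (hC : C.PosSemidef) (hB' : (B.map (psiF α)).PosSemidef) (hC' : (C.map (psiF α)).PosSemidef)
    (h : ∀ i j, i ≠ j → B i j = 0 ∨ C i j = 0 ∨ B i j + C i j = 0) :
    ((B + C).map (psiF α)).PosSemidef := by
  classical
  convert (hB'.add hC').add (PosSemidef.diagonal
    (d := fun i => psiF α (B i i + C i i) - (psiF α (B i i) + psiF α (C i i)))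
    fun i => sub_nonneg.2 (psiF_add_le hα hB.diag_nonneg hC.diag_nonneg))
  ext i j
  by_cases hij : i = j
  · subst hij
    simp
  · rcases h i j hij with h | h | h
    · simp [h, hij, psiF_zero]
    · simp [h, hij, psiF_zero]
    · simp [hij, eq_neg_of_add_eq_zero_left h, psiF_neg, psiF_zero]

variable [Fintype W]

lemma posSemidef_real_iff {M : Matrix W W ℝ} :
    M.PosSemidef ↔ (∀ i j, M i j = M j i) ∧ ∀ z : W → ℝ, 0 ≤ ∑ i, ∑ j, z i * M i j * z j := by
  rw [posSemidef_iff_dotProduct_mulVec]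
  refine and_congr ⟨fun h i j => by simpa using (h.apply j i).symm ▸ rfl,
    fun h => Matrix.IsHermitian.ext fun i j => by simpa using h j i⟩ ?_
  simp [dotProduct, mulVec, Finset.mul_sum, mul_assoc]

lemma Matrix.PosSemidef.real_symm {M : Matrix W W ℝ} (h : M.PosSemidef) (i j : W) :
    M i j = M j i := (posSemidef_real_iff.1 h).1 i j

lemma Matrix.PosSemidef.sq_apply_le {M : Matrix W W ℝ} (h : M.PosSemidef) (i j : W) :
    M i j ^ 2 ≤ M i i * M j j := by
  have h2 := (h.submatrix ![i, j]).det_nonneg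
  rw [det_fin_two] at h2
  simp only [submatrix_apply, cons_val_zero, cons_val_one] at h2
  rw [h.real_symm j i] at h2
  nlinarith

lemma posSemidef_elimVertex {A : Matrix W W ℝ} (h : A.PosSemidef) (u : W) :
    (elimVertex A u).PosSemidef := by
  classical
  by_cases hd : A u u = 0
  · convert h
    ext i j
    simp [elimVertex, hd]
  · convert h.conjTranspose_mul_mul_same (1 - of fun i j => if i = u then A u j / A u u else 0)
    ext i j
    have hl (i j) : (A * (1 - of fun i j => if i = u then A u j / A u u else 0)) i j
        = elimVertex A u i j := by
      rw [mul_sub, Matrix.mul_one, Matrix.sub_apply, mul_apply]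
      simp [elimVertex, mul_div_assoc]
    rw [Matrix.mul_assoc, conjTranspose_sub, sub_mul, Matrix.sub_apply, conjTranspose_one,
      Matrix.one_mul, hl, mul_apply]
    simp only [hl, conjTranspose_apply, of_apply, star_trivial, ite_mul, zero_mul,
      Finset.sum_ite_eq', Finset.mem_univ, if_true]
    simp [elimVertex, hd]

lemma elimVertex_left {A : Matrix W W ℝ} (h : A.PosSemidef) (u j : W) :
    elimVertex A u u j = 0 := by
  by_cases hd : A u u = 0
  · have := h.sq_apply_le u j
    rw [hd, zero_mul] at this
    simp [elimVertex, hd, pow_eq_zero_iff (two_ne_zero) |>.1 (le_antisymm this (sq_nonneg _))]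
  · simp [elimVertex, mul_div_cancel_left₀ _ hd]

lemma posSemidef_rankOne (a : W → ℝ) {c : ℝ} (hc : 0 ≤ c) :
    (of fun i j => a i * a j * c : Matrix W W ℝ).PosSemidef := by
  convert (posSemidef_vecMulVec_self_star a).smul hc
  ext i j
  simp [vecMulVec]
  ring

lemma posSemidef_of_support_pair {N : Matrix W W ℝ} {x y : W} (hxy : x ≠ y)
    (hs : ∀ i j, N i j = N j i) (h0 : ∀ i j, i ≠ x → i ≠ y → N i j = 0)
    (hx : 0 ≤ N x x) (hy : 0 ≤ N y y) (hN : N x y ^ 2 ≤ N x x * N y y) : N.PosSemidef := by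
  refine posSemidef_real_iff.2 ⟨hs, fun z => ?_⟩
  have hr (i) : ∑ j, z i * N i j * z j = z i * N i x * z x + z i * N i y * z y :=
    Fintype.sum_eq_add x y hxy fun j hj => by rw [hs, h0 j i hj.1 hj.2]; simp
  rw [Fintype.sum_eq_add x y hxy fun i hi => by simp [h0 i _ hi.1 hi.2], hr, hr, hs y x]
  rcases hx.eq_or_lt with h | h
  · rw [← h, zero_mul] at hN
    rw [pow_eq_zero_iff two_ne_zero |>.1 (le_antisymm hN (sq_nonneg _)), ← h]
    nlinarith [mul_nonneg hy (sq_nonneg (z y))]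
  · refine nonneg_of_mul_nonneg_right ?_ h
    nlinarith [sq_nonneg (N x x * z x + N x y * z y), mul_nonneg (sub_nonneg.2 hN) (sq_nonneg (z y))]

/-- Entrywise `ψ_α` is Loewner monotone along increments supported on a `2 × 2` block. -/
lemma posSemidef_map_psiF_sub {α : ℝ} (hα : 1 ≤ α) {Y D : Matrix W W ℝ} (hY : Y.PosSemidef)
    (hD : D.PosSemidef) {x y : W} (hxy : x ≠ y) (h0 : ∀ i j, i ≠ x → i ≠ y → D i j = 0) :
    ((Y + D).map (psiF α) - Y.map (psiF α)).PosSemidef := by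
  refine posSemidef_real_iff.2 ⟨fun i j => by
    simp [hY.real_symm i j, hD.real_symm i j], fun z => ?_⟩
  let F : ℝ → ℝ := fun t => ∑ i, ∑ j, z i * psiF α (Y i j + t * D i j) * z j
  have hF (t : ℝ) : HasDerivAt F
      (∑ i, ∑ j, z i * (α * |Y i j + t * D i j| ^ (α - 1) * D i j) * z j) t := by
    refine HasDerivAt.fun_sum fun i _ => HasDerivAt.fun_sum fun j _ => ?_
    have h1 : HasDerivAt (fun t => Y i j + t * D i j) (D i j) t := by
      simpa using ((hasDerivAt_id t).mul_const (D i j)).const_add (Y i j)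
    exact (((hasDerivAt_psiF hα _).comp t h1).const_mul (z i)).mul_const (z j)
  have hmono : MonotoneOn F (Ici 0) := by
    refine monotoneOn_of_deriv_nonneg (convex_Ici 0)
      (fun t _ => (hF t).continuousAt.continuousWithinAt)
      (fun t _ => (hF t).differentiableAt.differentiableWithinAt) fun t ht => ?_
    rw [interior_Ici] at ht
    rw [(hF t).deriv]
    have hM : (Y + t • D).PosSemidef := hY.add (hD.smul (le_of_lt ht))
    refine (posSemidef_real_iff.1 (posSemidef_of_support_pair
      (N := of fun i j => α * |Y i j + t * D i j| ^ (α - 1) * D i j) hxy ?_ ?_ ?_ ?_ ?_)).2 z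
    · intro i j
      simp [hY.real_symm i j, hD.real_symm i j]
    · intro i j hi hj
      simp [h0 i j hi hj]
    · have := hD.diag_nonneg (i := x)
      simp only [of_apply]
      positivity
    · have := hD.diag_nonneg (i := y)
      simp only [of_apply]
      positivity
    · have h1 := hM.sq_apply_le x y
      have h2 := hD.sq_apply_le x y
      simp only [Matrix.add_apply, Matrix.smul_apply, smul_eq_mul] at h1
      have h3 : (|Y x y + t * D x y| ^ (α - 1)) ^ 2 ≤
          |Y x x + t * D x x| ^ (α - 1) * |Y y y + t * D y y| ^ (α - 1) := by
        rw [← Real.mul_rpow (abs_nonneg _) (abs_nonneg _), sq,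
          ← Real.mul_rpow (abs_nonneg _) (abs_nonneg _), ← abs_mul, ← abs_mul, ← sq,
          abs_of_nonneg (sq_nonneg _)]
        exact Real.rpow_le_rpow (sq_nonneg _) (h1.trans (le_abs_self _)) (by linarith)
      have h4 := mul_le_mul h3 h2 (sq_nonneg _) (by positivity)
      simp only [of_apply]
      nlinarith [mul_le_mul_of_nonneg_left h4 (sq_nonneg α)]
  have h01 : F 0 ≤ F 1 := hmono (by simp) (by simp) zero_le_one
  simpa [F, mul_sub, sub_mul, Finset.sum_sub_distrib] using h01

lemma posSemidef_map_psiF_rankOne (α : ℝ) {A : Matrix W W ℝ} (h : A.PosSemidef) (u : W) :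
    ((A - elimVertex A u).map (psiF α)).PosSemidef := by
  convert posSemidef_rankOne (fun i => psiF α (A i u))
    (psiF_nonneg α (inv_nonneg.2 (h.diag_nonneg (i := u))))
  ext i j
  simp [elimVertex, div_eq_mul_inv, psiF_mul, h.real_symm u j]

lemma posSemidef_sub_elimVertex {A : Matrix W W ℝ} (h : A.PosSemidef) (u : W) :
    (A - elimVertex A u).PosSemidef := by
  convert posSemidef_rankOne (fun i => A i u) (inv_nonneg.2 (h.diag_nonneg (i := u)))
  ext i j
  simp [elimVertex, div_eq_mul_inv, h.real_symm u j]

/-- Entrywise `ψ_α` preserves positivity of matrices supported on a `3 × 3` block. -/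
lemma posSemidef_map_psiF_of_support_triple {α : ℝ} (hα : 1 ≤ α) {C : Matrix W W ℝ}
    (hC : C.PosSemidef) {x y u : W} (hxy : x ≠ y)
    (h0 : ∀ i j, i ≠ x → i ≠ y → i ≠ u → C i j = 0) : (C.map (psiF α)).PosSemidef := by
  have h := (posSemidef_map_psiF_sub hα (posSemidef_sub_elimVertex hC u)
    (posSemidef_elimVertex hC u) hxy fun i j hx hy => ?_).add
    (posSemidef_map_psiF_rankOne α hC u)
  · simpa using h
  · by_cases hu : i = u
    · rw [hu, elimVertex_left hC]
    · simp [elimVertex, h0 i _ hx hy hu]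

lemma elimVertex_right {A : Matrix W W ℝ} (h : A.PosSemidef) (u i : W) :
    elimVertex A u i u = 0 := by
  rw [(posSemidef_elimVertex h u).real_symm, elimVertex_left h]

/-- Elimination of a vertex whose neighbours are pairwise non-adjacent. -/
lemma posSemidef_map_psiF_of_elimVertex {α : ℝ} (hα : 1 ≤ α) {A : Matrix W W ℝ}
    (hA : A.PosSemidef) (u : W)
    (h : ∀ i j, i ≠ j → i ≠ u → j ≠ u → A i u ≠ 0 → A u j ≠ 0 → A i j = 0)
    (h' : ((elimVertex A u).map (psiF α)).PosSemidef) : (A.map (psiF α)).PosSemidef := by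
  have := posSemidef_map_psiF_add hα (posSemidef_elimVertex hA u) (posSemidef_sub_elimVertex hA u)
    h' (posSemidef_map_psiF_rankOne α hA u) fun i j hij => ?_
  · simpa using this
  · by_cases hi : i = u
    · exact Or.inl (hi ▸ elimVertex_left hA u j)
    by_cases hj : j = u
    · exact Or.inl (hj ▸ elimVertex_right hA u i)
    by_cases hiu : A i u = 0
    · simp [elimVertex_apply_of_left hiu]
    by_cases hju : A u j = 0
    · simp [elimVertex_apply_of_right hju]
    · simp [h i j hij hi hj hiu hju]

/-- Elimination of the two vertices `u`, `w` of a triangle hanging off the vertex `v`. -/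
lemma posSemidef_map_psiF_of_elimVertex_triangle {α : ℝ} (hα : 1 ≤ α) {A : Matrix W W ℝ}
    (hA : A.PosSemidef) {v w u : W} (hvw : v ≠ w)
    (h : ∀ i, i ≠ v → i ≠ w → i ≠ u → A i u = 0 ∧ A i w = 0)
    (h' : ((elimVertex (elimVertex A u) w).map (psiF α)).PosSemidef) :
    (A.map (psiF α)).PosSemidef := by
  have hA' := posSemidef_elimVertex hA u
  have hA'' := posSemidef_elimVertex hA' w
  have hC : (A - elimVertex (elimVertex A u) w).PosSemidef := by
    simpa using (posSemidef_sub_elimVertex hA u).add (posSemidef_sub_elimVertex hA' w)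
  have hC0 : ∀ i j, i ≠ v → i ≠ w → i ≠ u → (A - elimVertex (elimVertex A u) w) i j = 0 := by
    intro i j hv hw hu
    obtain ⟨h1, h2⟩ := h i hv hw hu
    rw [Matrix.sub_apply, elimVertex_apply_of_left (by rw [elimVertex_apply_of_left h1, h2]),
      elimVertex_apply_of_left h1, sub_self]
  have hB0 : ∀ i j, i = w ∨ i = u → elimVertex (elimVertex A u) w i j = 0 := by
    rintro i j (rfl | rfl)
    · exact elimVertex_left hA' _ _
    · rw [elimVertex_apply_of_left (elimVertex_left hA _ _), elimVertex_left hA]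
  have := posSemidef_map_psiF_add hα hA'' hC h'
    (posSemidef_map_psiF_of_support_triple hα hC hvw hC0) fun i j hij => ?_
  · simpa using this
  · by_cases hi : i = w ∨ i = u
    · exact Or.inl (hB0 i j hi)
    by_cases hj : j = w ∨ j = u
    · exact Or.inl (by rw [hA''.real_symm, hB0 j i hj])
    push Not at hi hj
    by_cases hiv : i = v
    · refine Or.inr (Or.inl ?_)
      rw [hC.real_symm]
      exact hC0 j i (fun hjv => hij (hiv.trans hjv.symm)) hj.1 hj.2
    · exact Or.inr (Or.inl (hC0 i j hiv hi.1 hi.2))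

end PosSemidef

section Cactus

variable {V : Type*} {n : ℕ}

/-- The off-diagonal support of `A` lies in the graph consisting of `G` and a cycle through `v`
and the first `k` additional vertices. -/
def SupportedOnCycleAt (G : SimpleGraph V) (v : V) (k : ℕ)
    (A : Matrix (V ⊕ Fin n) (V ⊕ Fin n) ℝ) : Prop :=
  (∀ a b, a ≠ b → ¬ G.Adj a b → A (.inl a) (.inl b) = 0) ∧
  (∀ a (i : Fin n), A (.inl a) (.inr i) ≠ 0 →
    a = v ∧ (i : ℕ) < k ∧ ((i : ℕ) = 0 ∨ (i : ℕ) + 1 = k)) ∧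
  ∀ i j : Fin n, i ≠ j → A (.inr i) (.inr j) ≠ 0 →
    (i : ℕ) < k ∧ (j : ℕ) < k ∧ ((j : ℕ) = i + 1 ∨ (i : ℕ) = j + 1)

variable [Fintype V]

lemma SupportedOnCycleAt.elimVertex {G : SimpleGraph V} {v : V} {k : ℕ}
    {A : Matrix (V ⊕ Fin n) (V ⊕ Fin n) ℝ} (h : SupportedOnCycleAt G v (k + 1) A)
    (hA : A.PosSemidef) (hk : k < n) :
    SupportedOnCycleAt G v k (elimVertex A (.inr ⟨k, hk⟩)) := by
  obtain ⟨h1, h2, h3⟩ := h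
  have hs := hA.real_symm
  refine ⟨fun a b hab hadj => ?_, fun a i hai => ?_, fun i j hij hne => ?_⟩
  · by_cases ha : A (.inl a) (.inr ⟨k, hk⟩) = 0
    · rw [elimVertex_apply_of_left ha, h1 a b hab hadj]
    by_cases hb : A (.inr ⟨k, hk⟩) (.inl b) = 0
    · rw [elimVertex_apply_of_right hb, h1 a b hab hadj]
    rw [hs] at hb
    exact absurd ((h2 a _ ha).1.trans (h2 b _ hb).1.symm) hab
  · have hik : i ≠ ⟨k, hk⟩ := by
      rintro rfl
      exact hai (elimVertex_right hA _ _)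
    have hik' : (i : ℕ) ≠ k := fun h => hik (Fin.ext h)
    by_cases ha : A (.inl a) (.inr ⟨k, hk⟩) = 0
    · rw [elimVertex_apply_of_left ha] at hai
      have := h2 a i hai
      exact ⟨this.1, by lia, by lia⟩
    by_cases hb : A (.inr ⟨k, hk⟩) (.inr i) = 0
    · rw [elimVertex_apply_of_right hb] at hai
      have := h2 a i hai
      exact ⟨this.1, by lia, by lia⟩
    have := h3 _ _ hik.symm hb
    simp only at this
    exact ⟨(h2 a _ ha).1, by lia, by lia⟩
  · have hik : i ≠ ⟨k, hk⟩ := by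
      rintro rfl
      exact hne (elimVertex_left hA _ _)
    have hjk : j ≠ ⟨k, hk⟩ := by
      rintro rfl
      exact hne (elimVertex_right hA _ _)
    have hik' : (i : ℕ) ≠ k := fun h => hik (Fin.ext h)
    have hjk' : (j : ℕ) ≠ k := fun h => hjk (Fin.ext h)
    by_cases ha : A (.inr i) (.inr ⟨k, hk⟩) = 0
    · rw [elimVertex_apply_of_left ha] at hne
      have := h3 i j hij hne
      exact ⟨by lia, by lia, by lia⟩
    by_cases hb : A (.inr ⟨k, hk⟩) (.inr j) = 0
    · rw [elimVertex_apply_of_right hb] at hne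
      have := h3 i j hij hne
      exact ⟨by lia, by lia, by lia⟩
    have h4 := h3 _ _ hik ha
    have h5 := h3 _ _ hjk.symm hb
    simp only at h4 h5
    exact absurd (Fin.ext (by lia)) hij

lemma posSemidef_of_block_diagonal {A : Matrix (V ⊕ Fin n) (V ⊕ Fin n) ℝ}
    (hs : ∀ i j, A i j = A j i) (h : (A.submatrix Sum.inl Sum.inl).PosSemidef)
    (h0 : ∀ a i, A (.inl a) (.inr i) = 0) (hd : ∀ i j, i ≠ j → A (.inr i) (.inr j) = 0)
    (hnn : ∀ i, 0 ≤ A (.inr i) (.inr i)) : A.PosSemidef := by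
  refine posSemidef_real_iff.2 ⟨hs, fun z => ?_⟩
  have h1 := (posSemidef_real_iff.1 h).2 (z ∘ Sum.inl)
  have h2 (i : Fin n) : ∑ j, z (.inr i) * A (.inr i) (.inr j) * z (.inr j)
      = z (.inr i) * A (.inr i) (.inr i) * z (.inr i) :=
    Fintype.sum_eq_single i fun j hj => by simp [hd i j hj.symm]
  have h3 (i a) : A (.inr i) (.inl a) = 0 := by rw [hs, h0]
  simp only [Fintype.sum_sum_type, h0, h3, h2, mul_zero, zero_mul, Finset.sum_const_zero, add_zero,
    zero_add]
  refine add_nonneg h1 (Finset.sum_nonneg fun i _ => ?_)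
  nlinarith [mul_nonneg (hnn i) (sq_nonneg (z (.inr i)))]

lemma posSemidef_map_psiF_of_supportedOnCycleAt {α : ℝ} (hα : 1 ≤ α) {G : SimpleGraph V} (v : V)
    (hG : ∀ A : Matrix V V ℝ, A.PosSemidef → (∀ a b, a ≠ b → ¬ G.Adj a b → A a b = 0) →
      (A.map (psiF α)).PosSemidef) (k : ℕ) (hk : k ≤ n)
    (A : Matrix (V ⊕ Fin n) (V ⊕ Fin n) ℝ) (hA : A.PosSemidef)
    (h : SupportedOnCycleAt G v k A) : (A.map (psiF α)).PosSemidef := by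
  induction k using Nat.strong_induction_on generalizing A with
  | _ k ih =>
  rcases k with _ | k
  · obtain ⟨h1, h2, h3⟩ := h
    refine posSemidef_of_block_diagonal (fun i j => by simp [hA.real_symm i j])
      (hG _ (hA.submatrix Sum.inl) h1) (fun a i => ?_) (fun i j hij => ?_)
      fun i => psiF_nonneg α hA.diag_nonneg
    · rw [map_apply, show A (.inl a) (.inr i) = 0 by
        by_contra hne
        exact absurd (h2 a i hne).2.1 (Nat.not_lt_zero _), psiF_zero]
    · rw [map_apply, show A (.inr i) (.inr j) = 0 by
        by_contra hne
        exact absurd (h3 i j hij hne).1 (Nat.not_lt_zero _), psiF_zero]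
  have hA' := posSemidef_elimVertex hA (.inr ⟨k, hk⟩)
  have h' := h.elimVertex hA hk
  by_cases hk1 : k = 1
  · subst hk1
    refine posSemidef_map_psiF_of_elimVertex_triangle hα hA (v := .inl v) (w := .inr ⟨0, by lia⟩)
      (u := .inr ⟨1, hk⟩) (by simp) ?_
      (ih 0 (by lia) (by lia) _ (posSemidef_elimVertex hA' _) (h'.elimVertex hA' (by lia)))
    rintro (a | i) hv hw hu
    · have ha : a ≠ v := fun h => hv (h ▸ rfl)
      exact ⟨by_contra fun hne => ha (h.2.1 a _ hne).1, by_contra fun hne => ha (h.2.1 a _ hne).1⟩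
    · have hi0 : i ≠ ⟨0, by lia⟩ := fun h => hw (h ▸ rfl)
      have hi1 : i ≠ ⟨1, hk⟩ := fun h => hu (h ▸ rfl)
      have hi0' : (i : ℕ) ≠ 0 := fun h => hi0 (Fin.ext h)
      have hi1' : (i : ℕ) ≠ 1 := fun h => hi1 (Fin.ext h)
      exact ⟨by_contra fun hne => by have := (h.2.2 i _ hi1 hne).1; lia,
        by_contra fun hne => by have := (h.2.2 i _ hi0 hne).1; lia⟩
  · refine posSemidef_map_psiF_of_elimVertex hα hA (.inr ⟨k, hk⟩) ?_
      (ih k (by lia) (by lia) _ hA' h')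
    obtain ⟨h1, h2, h3⟩ := h
    have hs := hA.real_symm
    have hcross (a : V) (i : Fin n) (hi : i ≠ ⟨k, hk⟩) (hiu : A (.inr i) (.inr ⟨k, hk⟩) ≠ 0) :
        A (.inl a) (.inr i) = 0 := by
      by_contra hne
      have h4 := h3 _ _ hi hiu
      have h5 := h2 a i hne
      simp only at h4
      lia
    rintro (a | i) (b | j) hij hi hj hiu hju
    · rw [hs] at hju
      exact absurd ((h2 a _ hiu).1.trans (h2 b _ hju).1.symm) fun h => hij (h ▸ rfl)
    · exact hcross a j (fun h => hj (h ▸ rfl)) (by rwa [hs])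
    · rw [hs]
      exact hcross b i (fun h => hi (h ▸ rfl)) hiu
    · have h4 := h3 i _ (fun h => hi (h ▸ rfl)) hiu
      have h5 := h3 _ j (fun h => hj (h ▸ rfl)) hju
      simp only at h4 h5
      exact absurd (congrArg Sum.inr (Fin.ext (by lia))) hij

end Cactus

lemma CactusBuilt.posSemidef_map_psiF {α : ℝ} (hα : 1 ≤ α) {W : Type} {G : SimpleGraph W}
    (hc : CactusBuilt G) [hW : Finite W] {A : Matrix W W ℝ} (hA : A.PosSemidef)
    (h0 : ∀ i j, i ≠ j → ¬ G.Adj i j → A i j = 0) : (A.map (psiF α)).PosSemidef := by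
  induction hc generalizing hW with
  | single =>
    convert PosSemidef.diagonal (d := fun i => psiF α (A i i))
      fun i => psiF_nonneg α hA.diag_nonneg
    ext i j
    simp [Subsingleton.elim i j]
  | @attach W G v p hp _ ih =>
    have : Finite W := Finite.sum_left (Fin (p - 1))
    have := Fintype.ofFinite W
    refine posSemidef_map_psiF_of_supportedOnCycleAt hα v (fun A hA h => ih hA h) (p - 1) le_rfl A
      hA ⟨fun a b hab hadj => h0 _ _ (by simpa using hab) ?_, fun a i hne => ?_,
        fun i j hij hne => ?_⟩
    · simpa [addCycleAt, G.adj_comm b a] using fun _ => hadj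
    · by_contra hcon
      refine hne (h0 _ _ (by simp) fun hadj => hcon ?_)
      simp only [addCycleAt, SimpleGraph.fromRel_adj] at hadj
      exact ⟨by tauto, i.2, by lia⟩
    · by_contra hcon
      refine hne (h0 _ _ (by simpa using hij) fun hadj => hcon ?_)
      simp only [addCycleAt, SimpleGraph.fromRel_adj] at hadj
      exact ⟨i.2, j.2, by lia⟩

lemma CactusBuilt.exists_adj {W : Type} {G : SimpleGraph W} (hc : CactusBuilt G) [hW : Nontrivial W]
    (w : W) : ∃ x, G.Adj w x := by
  induction hc generalizing hW with
  | single => exact absurd hW (not_nontrivial _)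
  | @attach W G v p hp _ ih =>
    rcases w with a | i
    · by_cases ha : a = v
      · exact ⟨.inr ⟨0, by lia⟩, by simp [addCycleAt, ha]⟩
      · have : Nontrivial W := ⟨a, v, ha⟩
        obtain ⟨x, hx⟩ := ih a
        exact ⟨.inl x, by simp [addCycleAt, hx, hx.ne]⟩
    · by_cases hi : (i : ℕ) = 0
      · exact ⟨.inl v, by simp [addCycleAt, hi]⟩
      · refine ⟨.inr ⟨i - 1, by lia⟩, ?_⟩
        simp only [addCycleAt, SimpleGraph.fromRel_adj, ne_eq, Sum.inr.injEq, Fin.ext_iff]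
        lia

lemma CactusBuilt.exists_path {W : Type} [Fintype W] {G : SimpleGraph W} (hc : CactusBuilt G)
    (hcard : 3 ≤ Fintype.card W) : ∃ m x y, x ≠ y ∧ G.Adj m x ∧ G.Adj m y := by
  cases hc with
  | single => simp at hcard
  | @attach W G v p hp hc =>
    by_cases hp2 : p = 2
    · subst hp2
      have : Finite W := Finite.sum_left (Fin (2 - 1))
      have := Fintype.ofFinite W
      have hW : 1 < Fintype.card W := by
        have : Fintype.card (W ⊕ Fin (2 - 1)) = Fintype.card W + 1 := by
          rw [← Nat.card_eq_fintype_card, Nat.card_sum]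
          simp
        lia
      have := Fintype.one_lt_card_iff_nontrivial.1 hW
      obtain ⟨x, hx⟩ := hc.exists_adj v
      exact ⟨.inl v, .inl x, .inr 0, by simp, by simp [addCycleAt, hx, hx.ne],
        by simp [addCycleAt]⟩
    · exact ⟨.inr ⟨0, by lia⟩, .inl v, .inr ⟨1, by lia⟩, by simp, by simp [addCycleAt],
        by simp [addCycleAt]⟩

/-- The positive semidefinite test matrix on a path `x - m - y` with unit diagonal and
off-diagonal entries `√2 / 2`. -/
lemma exists_path_matrix {W : Type} [Fintype W] {G : SimpleGraph W} {m x y : W} (hxy : x ≠ y)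
    (hx : G.Adj m x) (hy : G.Adj m y) : ∃ A ∈ PsetG G (Ici (0 : ℝ)),
      A.submatrix ![m, x, y] ![m, x, y] =
        !![1, √2 / 2, √2 / 2; √2 / 2, 1, 0; √2 / 2, 0, 1] := by
  classical
  have hc : (√2 / 2 : ℝ) * (√2 / 2) = 1 / 2 := by
    rw [div_mul_div_comm, Real.mul_self_sqrt zero_le_two]
    norm_num
  have hmx := hx.ne
  have hmy := hy.ne
  let a : W → ℝ := Pi.single m (√2 / 2) + Pi.single x 1
  let b : W → ℝ := Pi.single m (√2 / 2) + Pi.single y 1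
  refine ⟨vecMulVec a (star a) + vecMulVec b (star b),
    ⟨(posSemidef_vecMulVec_self_star a).add (posSemidef_vecMulVec_self_star b), fun i j => ?_,
      fun i j hij hadj => ?_⟩, ?_⟩
  · have ha (i) : 0 ≤ a i := by
      simp only [a, Pi.add_apply, Pi.single_apply]
      positivity
    have hb (i) : 0 ≤ b i := by
      simp only [b, Pi.add_apply, Pi.single_apply]
      positivity
    exact add_nonneg (mul_nonneg (ha i) (ha j)) (mul_nonneg (hb i) (hb j))
  · have hx' := hx.symm
    have hy' := hy.symm
    simp only [Matrix.add_apply, vecMulVec_apply, a, b, Pi.add_apply, Pi.single_apply,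
      star_trivial]
    grind
  · ext i j
    fin_cases i <;> fin_cases j <;>
      simp [a, b, vecMulVec_apply, hmx, hmy, hmx.symm, hmy.symm, hxy, hxy.symm, hc]
    norm_num

lemma one_le_of_path_matrix_map {α : ℝ} {f : ℝ → ℝ} (h0 : f 0 = 0) (h1 : f 1 = 1)
    (hf : f (√2 / 2) = (√2 / 2) ^ α)
    (h : ((!![1, √2 / 2, √2 / 2; √2 / 2, 1, 0; √2 / 2, 0, 1] : Matrix (Fin 3) (Fin 3) ℝ).map
      f).PosSemidef) : 1 ≤ α := by
  have hd := h.det_nonneg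
  simp only [det_fin_three, map_apply, of_apply, cons_val', cons_val_zero, cons_val_one, cons_val,
    h0, h1, hf] at hd
  have hs : (√2 / 2 : ℝ) * (√2 / 2) = 1 / 2 := by
    rw [div_mul_div_comm, Real.mul_self_sqrt zero_le_two]
    norm_num
  have hc0 : (0 : ℝ) < √2 / 2 := by positivity
  have hc1 : √2 / 2 < 1 := by nlinarith
  by_contra hα
  have hlt : √2 / 2 < (√2 / 2) ^ α := by
    simpa using Real.rpow_lt_rpow_of_exponent_gt hc0 hc1 (not_le.1 hα)
  nlinarith

lemma powEnt_eq_psiF (α : ℝ) {x : ℝ} (hx : 0 ≤ x) : powEnt α x = psiF α x := by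
  rcases hx.eq_or_lt with rfl | hx
  · simp [powEnt, psiF]
  · simp [powEnt, psiF, hx.ne', Real.sign_of_pos hx, abs_of_pos hx]

lemma phiF_eq_psiF (α x : ℝ) : phiF α x = psiF (α / 2) (x * x) := by
  by_cases hx : x = 0
  · simp [hx, phiF, psiF]
  · rw [phiF, if_neg hx, psiF, Real.sign_of_pos (mul_self_pos.2 hx), one_mul, abs_mul, ← sq,
      ← Real.rpow_natCast_mul (abs_nonneg x)]
    congr 1
    push_cast
    ring

lemma Matrix.PosSemidef.map_mul_self {W : Type*} [Fintype W] {A : Matrix W W ℝ}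
    (h : A.PosSemidef) : (A.map fun x => x * x).PosSemidef := by
  exact (h.kronecker h).submatrix fun i : W => (i, i)

/-- **Corollary 4.12 (cactus graphs)**: for a connected cactus graph `G` with at least 3
vertices, `H_G = H_G^ψ = [1,∞)` and `[2,∞) ⊆ H_G^φ ⊆ [1,∞)`. -/
theorem Hsets_cactus {W : Type} [Fintype W] [DecidableEq W] (G : SimpleGraph W)
    (hc : CactusBuilt G) (hcard : 3 ≤ Fintype.card W) :
    HsetG G = Ici (1 : ℝ) ∧ HsetPsi G = Ici (1 : ℝ) ∧
    Ici (2 : ℝ) ⊆ HsetPhi G ∧ HsetPhi G ⊆ Ici (1 : ℝ) := by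
  obtain ⟨m, x, y, hxy, hx, hy⟩ := hc.exists_path hcard
  obtain ⟨A₀, hA₀, hsub⟩ := exists_path_matrix hxy hx hy
  have hA₀' : A₀ ∈ PsetG G univ := ⟨hA₀.1, fun _ _ => mem_univ _, hA₀.2.2⟩
  have hpos : (0 : ℝ) < √2 / 2 := by positivity
  have key {α : ℝ} {f : ℝ → ℝ} (h0 : f 0 = 0) (h1 : f 1 = 1)
      (hf : f (√2 / 2) = (√2 / 2) ^ α) (h : A₀.map f ∈ PsetG G univ) : 1 ≤ α := by
    refine one_le_of_path_matrix_map h0 h1 hf ?_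
    rw [← hsub]
    exact h.1.submatrix ![m, x, y]
  have hpsi {α : ℝ} (hα : 1 ≤ α) {A : Matrix W W ℝ} (hA : A ∈ PsetG G univ) :
      A.map (psiF α) ∈ PsetG G univ :=
    ⟨hc.posSemidef_map_psiF hα hA.1 hA.2.2, fun _ _ => mem_univ _, fun i j hij hadj => by
      rw [map_apply, hA.2.2 i j hij hadj, psiF_zero]⟩
  refine ⟨Subset.antisymm (fun α hα => ?_) fun α hα A hA => ?_,
    Subset.antisymm (fun α hα => ?_) fun α hα A hA => hpsi hα hA, fun α hα A hA => ?_,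
    fun α hα => ?_⟩
  · exact key (by simp [powEnt]) (by simp [powEnt]) (by rw [powEnt, if_neg hpos.ne'])
      (hα A₀ hA₀)
  · rw [show A.map (powEnt α) = A.map (psiF α) from
      Matrix.ext fun i j => powEnt_eq_psiF α (hA.2.1 i j)]
    exact hpsi hα ⟨hA.1, fun _ _ => mem_univ _, hA.2.2⟩
  · exact key (by simp [psiF]) (by simp [psiF])
      (by rw [psiF, Real.sign_of_pos hpos, one_mul, abs_of_pos hpos]) (hα A₀ hA₀')
  · rw [show A.map (phiF α) = (A.map fun x => x * x).map (psiF (α / 2)) from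
      Matrix.ext fun i j => phiF_eq_psiF α (A i j)]
    have hα2 : 2 ≤ α := hα
    exact hpsi (by linarith) ⟨hA.1.map_mul_self, fun _ _ => mem_univ _, fun i j hij hadj => by
      rw [map_apply, hA.2.2 i j hij hadj, mul_zero]⟩
  · exact key (by simp [phiF]) (by simp [phiF])
      (by rw [phiF, if_neg hpos.ne', abs_of_pos hpos]) (hα A₀ hA₀')
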